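/- Fix 0 < δ ≤ 1/2. Let x = (x_1 … x_n)_2, y = (y_1 … y_n)_2 be n-bit nonnegative integers and z = (z_1 … z_{n+1})_2 an (n+1)-bit nonnegative integer (most significant bit first) with x + y = z and x ≥ y. Then (1−δ) · (0.x_1 … x_n)_δ + δ · (0.y_1 … y_n)_δ ≥ (0.z_1 … z_{n+1})_δ. -/

import Mathlib

/-!
Write `F` for the singular function on `[0, 1]` with `F (t / 2) = (1 - δ) F t` and
`F ((1 + t) / 2) = (1 - δ) + δ F t`. Then `(0.x₁…x_n)_δ = F (x / 2 ^ n)`, and the theorem says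
that `F ((X + Y) / 2) ≤ (1 - δ) F X + δ F Y` for `X ≥ Y`. `gridVal δ n k` is `F (k / 2 ^ n)`, and
`valD_eq_gridVal` is the identification.

The proof is by induction on the number of digits. If the leading digits of `X` and `Y` agree, both
sides transform by the same affine map. If they are `1` and `0`, with remainders `X'` and `Y'`, the
claim becomes, according to whether `X' + Y' < 1`, one of
`F (X' + Y') ≤ F X' + F Y'` and `1 + F (X' + Y' - 1) ≤ F X' + F Y'`.
These two inequalities hold without any order on `X'`, `Y'`; they are proved by a joint induction in
`gridVal_add`, which uses `δ ≤ 1 - δ` and `F ≤ 1`.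
-/

open Finset

/-- `s_x(i)`: the number of ones among the bits of `x` preceding position `i`. -/
def sBits {n : ℕ} (x : Fin n → Bool) (i : Fin n) : ℕ :=
  (univ.filter fun j : Fin n => j < i ∧ x j = true).card

/-- The base-`δ` expansion `(0.x₁…x_n)_δ = ∑ᵢ xᵢ (1−δ)^i (δ/(1−δ))^{s_x(i)}`
(indices starting from 1); for `δ = 1/2` this is the usual binary expansion. -/
noncomputable def valD (δ : ℝ) {n : ℕ} (x : Fin n → Bool) : ℝ :=
  ∑ i, if x i = true then (1 - δ) ^ (i.1 + 1) * (δ / (1 - δ)) ^ sBits x i else 0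

/-- The integer `(x₁…x_n)₂` with most significant bit first. -/
def binVal {n : ℕ} (x : Fin n → Bool) : ℕ :=
  ∑ i, if x i = true then 2 ^ (n - 1 - i.1) else 0

/-- The value at `k / 2 ^ n` of the function `F` with `F (t / 2) = (1 - δ) F t` and
`F ((1 + t) / 2) = (1 - δ) + δ F t`; meaningful for `k < 2 ^ n`. -/
noncomputable def gridVal (δ : ℝ) : ℕ → ℕ → ℝ
  | 0, _ => 0
  | n + 1, k => if k < 2 ^ n then (1 - δ) * gridVal δ n k
      else (1 - δ) + δ * gridVal δ n (k - 2 ^ n)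

lemma gridVal_lo (δ : ℝ) {n k : ℕ} (h : k < 2 ^ n) :
    gridVal δ (n + 1) k = (1 - δ) * gridVal δ n k := by
  simp [gridVal, h]

lemma gridVal_hi (δ : ℝ) (n k : ℕ) :
    gridVal δ (n + 1) (2 ^ n + k) = (1 - δ) + δ * gridVal δ n k := by
  simp [gridVal]

/-- The leading binary digit of an `(n + 1)`-digit number is `0` or `1`. -/
lemma lo_or_hi {n k : ℕ} (h : k < 2 ^ (n + 1)) :
    k < 2 ^ n ∨ ∃ k', k' < 2 ^ n ∧ k = 2 ^ n + k' := by
  rcases lt_or_ge k (2 ^ n) with h1 | h1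
  · exact Or.inl h1
  · exact Or.inr ⟨k - 2 ^ n, by rw [pow_succ] at h; omega, by omega⟩

lemma gridVal_mem (δ : ℝ) (hδ0 : 0 < δ) (hδ : δ ≤ 1 / 2) (n k : ℕ) :
    0 ≤ gridVal δ n k ∧ gridVal δ n k ≤ 1 := by
  induction n generalizing k with
  | zero => simp [gridVal]
  | succ n ih =>
    rw [gridVal]
    split_ifs
    · obtain ⟨h0, h1⟩ := ih k
      constructor <;> nlinarith
    · obtain ⟨h0, h1⟩ := ih (k - 2 ^ n)
      constructor <;> nlinarith

/-- Subadditivity of `F`, together with its companion when the sum carries past `1`. -/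
lemma gridVal_add (δ : ℝ) (hδ0 : 0 < δ) (hδ : δ ≤ 1 / 2) (n x y s : ℕ)
    (hx : x < 2 ^ n) (hy : y < 2 ^ n) (hs : s < 2 ^ n) :
    (x + y = s → gridVal δ n s ≤ gridVal δ n x + gridVal δ n y) ∧
    (x + y = 2 ^ n + s → 1 + gridVal δ n s ≤ gridVal δ n x + gridVal δ n y) := by
  induction n generalizing x y s with
  | zero =>
    simp only [pow_zero] at *
    refine ⟨fun _ => by simp [gridVal], fun h => by omega⟩
  | succ n ih =>
    have hp : 2 ^ (n + 1) = 2 ^ n + 2 ^ n := by ring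
    have key := gridVal_mem δ hδ0 hδ n
    rcases lo_or_hi hx with hx' | ⟨x, hx', rfl⟩ <;>
    rcases lo_or_hi hy with hy' | ⟨y, hy', rfl⟩ <;>
    rcases lo_or_hi hs with hs' | ⟨s, hs', rfl⟩ <;>
    simp only [gridVal_hi, gridVal_lo, hx', hy', hs'] <;>
    (obtain ⟨iA, iB⟩ := ih x y s hx' hy' hs'
     obtain ⟨x0, x1⟩ := key x
     obtain ⟨y0, y1⟩ := key y
     obtain ⟨s0, s1⟩ := key s
     refine ⟨fun h => ?_, fun h => ?_⟩ <;>
     first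
     | (exfalso; omega)
     | (have iA' := iA (by omega)
        clear iA iB
        nlinarith)
     | (have iB' := iB (by omega)
        clear iA iB
        nlinarith))

/-- The theorem in terms of `gridVal`: `F ((X + Y) / 2) ≤ (1 - δ) F X + δ F Y` for `Y ≤ X`. -/
lemma gridVal_midpoint (δ : ℝ) (hδ0 : 0 < δ) (hδ : δ ≤ 1 / 2) (n x y : ℕ)
    (hx : x < 2 ^ n) (hyx : y ≤ x) :
    gridVal δ (n + 1) (x + y) ≤ (1 - δ) * gridVal δ n x + δ * gridVal δ n y := by
  induction n generalizing x y with
  | zero =>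
    have hx0 : x = 0 := by simpa using hx
    have hy0 : y = 0 := by omega
    subst hx0 hy0
    simp [gridVal]
  | succ n ih =>
    have hp : 2 ^ (n + 1) = 2 ^ n + 2 ^ n := by ring
    have hy : y < 2 ^ (n + 1) := by omega
    rcases lo_or_hi hx with hx' | ⟨x, hx', rfl⟩ <;>
    rcases lo_or_hi hy with hy' | ⟨y, hy', rfl⟩
    · have h := ih x y hx' hyx
      rw [gridVal_lo δ (show x + y < 2 ^ (n + 1) by omega), gridVal_lo δ hx', gridVal_lo δ hy']
      nlinarith
    · omega
    · rcases lt_or_ge (x + y) (2 ^ n) with hs | hs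
      · have h := (gridVal_add δ hδ0 hδ n x y (x + y) hx' hy' hs).1 rfl
        rw [gridVal_lo δ (show 2 ^ n + x + y < 2 ^ (n + 1) by omega), add_assoc,
          gridVal_hi, gridVal_hi, gridVal_lo δ hy']
        have := mul_le_mul_of_nonneg_left h (show 0 ≤ (1 - δ) * δ by nlinarith)
        nlinarith
      · obtain ⟨s, hs⟩ := Nat.exists_eq_add_of_le hs
        have hs' : s < 2 ^ n := by omega
        have h := (gridVal_add δ hδ0 hδ n x y s hx' hy' hs').2 hs
        rw [show 2 ^ n + x + y = 2 ^ (n + 1) + s by omega, gridVal_hi, gridVal_hi,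
          gridVal_lo δ hy', gridVal_lo δ hs']
        have := mul_le_mul_of_nonneg_left h (show 0 ≤ (1 - δ) * δ by nlinarith)
        nlinarith
    · have h := ih x y hx' (by omega)
      rw [show 2 ^ n + x + (2 ^ n + y) = 2 ^ (n + 1) + (x + y) by omega, gridVal_hi,
        gridVal_hi, gridVal_hi]
      nlinarith

lemma binVal_succ {n : ℕ} (x : Fin (n + 1) → Bool) :
    binVal x = (if x 0 = true then 2 ^ n else 0) + binVal (fun i => x i.succ) := by
  unfold binVal
  rw [Fin.sum_univ_succ]
  congr 1
  refine Finset.sum_congr rfl fun i _ => ?_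
  rw [show n + 1 - 1 - (i.succ).1 = n - 1 - i.1 by simp only [Fin.val_succ]; omega]

lemma binVal_lt {n : ℕ} (x : Fin n → Bool) : binVal x < 2 ^ n := by
  induction n with
  | zero => simp [binVal]
  | succ n ih =>
    have h := ih (fun i => x i.succ)
    rw [binVal_succ, pow_succ]
    split_ifs <;> omega

lemma sBits_zero {n : ℕ} (x : Fin (n + 1) → Bool) : sBits x 0 = 0 := by
  simp [sBits]

lemma sBits_succ {n : ℕ} (x : Fin (n + 1) → Bool) (i : Fin n) :
    sBits x i.succ = (if x 0 = true then 1 else 0) + sBits (fun j => x j.succ) i := by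
  simp only [sBits, Finset.card_filter]
  rw [Fin.sum_univ_succ]
  simp [Fin.succ_lt_succ_iff]

lemma valD_succ (δ : ℝ) (hδ : δ ≤ 1 / 2) {n : ℕ} (x : Fin (n + 1) → Bool) :
    valD δ x = if x 0 = true then (1 - δ) + δ * valD δ (fun i => x i.succ)
      else (1 - δ) * valD δ (fun i => x i.succ) := by
  have h1 : (1 - δ) ≠ 0 := by linarith
  unfold valD
  rw [Fin.sum_univ_succ]
  simp only [sBits_zero, sBits_succ, Fin.val_succ]
  split_ifs with h
  · simp only [Finset.mul_sum]
    congr 1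
    · simp
    · refine Finset.sum_congr rfl fun i _ => ?_
      split_ifs
      · rw [pow_succ (1 - δ) (i.1 + 1), pow_add (δ / (1 - δ)) 1, pow_one]
        generalize (δ / (1 - δ)) ^ _ = t
        field_simp
      · simp
  · simp only [Finset.mul_sum, zero_add]
    refine Finset.sum_congr rfl fun i _ => ?_
    split_ifs
    · ring
    · simp

/-- The base-`δ` expansion `(0.x₁…x_n)_δ` is `F (x / 2 ^ n)`. -/
lemma valD_eq_gridVal (δ : ℝ) (hδ : δ ≤ 1 / 2) {n : ℕ} (x : Fin n → Bool) :
    valD δ x = gridVal δ n (binVal x) := by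
  induction n with
  | zero => simp [valD, gridVal]
  | succ n ih =>
    rw [valD_succ δ hδ, binVal_succ, ih]
    split_ifs
    · rw [gridVal_hi]
    · rw [zero_add, gridVal_lo δ (binVal_lt _)]

/-- If `x = (x₁…x_n)₂`, `y = (y₁…y_n)₂`, `z = (z₁…z_{n+1})₂`
(most significant bit first) satisfy `x + y = z` and `x ≥ y`, then
`(1−δ)(0.x₁…x_n)_δ + δ(0.y₁…y_n)_δ ≥ (0.z₁…z_{n+1})_δ`. -/
theorem stmt_12 (δ : ℝ) (hδ0 : 0 < δ) (hδ : δ ≤ 1 / 2) {n : ℕ}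
    (x y : Fin n → Bool) (z : Fin (n + 1) → Bool)
    (hsum : binVal x + binVal y = binVal z) (hge : binVal y ≤ binVal x) :
    valD δ z ≤ (1 - δ) * valD δ x + δ * valD δ y := by
  rw [valD_eq_gridVal δ hδ, valD_eq_gridVal δ hδ, valD_eq_gridVal δ hδ, ← hsum]
  exact gridVal_midpoint δ hδ0 hδ n _ _ (binVal_lt x) hge
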